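/- Fix an integer k ≥ 1. For every ε > 0 there exists C > 0 such that for every N > k and every X ∈ 𝔾_N, Σ over Y ∈ 𝔾_{N−1} satisfying |y_{(k)}| ≤ q^C |x_{(k)}| of Λ^N_{N−1}(X,Y) is at most ε; that is, as C gets large, the Λ^N_{N−1}(X,·)-probability of the event log_q|y_{(k)}| − log_q|x_{(k)}| ≥ C tends to 0 uniformly in N > k and X ∈ 𝔾_N. -/

import Mathlib

open scoped BigOperators
open Classical

noncomputable section

/-- The double q-lattice Λ = {ζ₋ qᵐ} ∪ {ζ₊ qⁿ}. -/
def Lambda (q zm zp : ℝ) : Set ℝ :=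
  {x | ∃ m : ℤ, x = zm * q ^ m} ∪ {x | ∃ n : ℤ, x = zp * q ^ n}

/-- The interval I(a,b) of the double q-lattice. -/
def qInterval (q zm zp a b : ℝ) : Set ℝ :=
  if b < 0 then Set.Ico a b ∩ Lambda q zm zp
  else if a < 0 then Set.Icc a b ∩ Lambda q zm zp
  else Set.Ioc a b ∩ Lambda q zm zp

/-- N-point configurations on the lattice. -/
def Conf (q zm zp : ℝ) (N : ℕ) : Type :=
  {x : Fin N → ℝ // StrictMono x ∧ ∀ i, x i ∈ Lambda q zm zp}

/-- Interlacement Y ≺ X. -/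
def Interlaces (q zm zp : ℝ) {N : ℕ} (Y : Conf q zm zp N) (X : Conf q zm zp (N+1)) : Prop :=
  ∀ i : Fin N, Y.1 i ∈ qInterval q zm zp (X.1 i.castSucc) (X.1 i.succ)

/-- Vandermonde-type product ∏_{i<j} (x_j - x_i). -/
def vprod {N : ℕ} (x : Fin N → ℝ) : ℝ :=
  ∏ p ∈ Finset.univ.filter (fun p : Fin N × Fin N => p.1 < p.2), (x p.2 - x p.1)

/-- finite q-Pochhammer symbol (a;q)_n, real version. -/
def qpochR (a q : ℝ) (n : ℕ) : ℝ := ∏ m ∈ Finset.range n, (1 - a * q ^ m)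

/-- The q-link Λ^{N+1}_N. -/
def qlink (q zm zp : ℝ) (N : ℕ) (X : Conf q zm zp (N+1)) (Y : Conf q zm zp N) : ℝ :=
  if Interlaces q zm zp Y X then
    (∏ i, |Y.1 i|) * qpochR q q N * vprod Y.1 / vprod X.1
  else 0


/-- comparison in the variational order: |a| < |b|, or |a| = |b| and a ≤ b. -/
def varLE (a b : ℝ) : Prop := |a| < |b| ∨ (|a| = |b| ∧ a ≤ b)

/-- v : Fin N → ℝ is the variational series of the configuration X. -/
def IsVarSeries (q zm zp : ℝ) {N : ℕ} (X : Conf q zm zp N) (v : Fin N → ℝ) : Prop :=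
  (∃ σ : Equiv.Perm (Fin N), v = X.1 ∘ σ) ∧ ∀ i j : Fin N, i < j → varLE (v j) (v i)

/-- the link weight as a function of arbitrary tuples -/
def Wt (q zm zp : ℝ) {M : ℕ} (x : Fin (M+1) → ℝ) (y : Fin M → ℝ) : ℝ :=
  if ∀ i : Fin M, y i ∈ qInterval q zm zp (x i.castSucc) (x i.succ) then
    (∏ i, |y i|) * qpochR q q M * vprod y / vprod x else 0

lemma zpow_le_iff' {q : ℝ} (hq0 : 0 < q) (hq1 : q < 1) (m n : ℤ) :
    q ^ m ≤ q ^ n ↔ n ≤ m := zpow_le_zpow_iff_right_of_lt_one₀ hq0 hq1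

lemma orb_of_pow {q z : ℝ} (hq0 : 0 < q) {m n : ℤ} (h : m ≤ n) :
    ∃ k : ℕ, z * q ^ n = z * q ^ m * q ^ k := by
  refine ⟨(n - m).toNat, ?_⟩
  rw [mul_assoc, ← zpow_natCast q, Int.toNat_of_nonneg (by omega), ← zpow_add₀ hq0.ne']
  congr 2; ring

lemma lam_ne {q zm zp : ℝ} (hq0 : 0 < q) (hzm : zm < 0) (hzp : 0 < zp) {x : ℝ}
    (hx : x ∈ Lambda q zm zp) : x ≠ 0 := by
  rcases hx with ⟨m, rfl⟩ | ⟨m, rfl⟩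
  · exact mul_ne_zero hzm.ne (zpow_pos hq0 m).ne'
  · exact mul_ne_zero hzp.ne' (zpow_pos hq0 m).ne'

lemma lam_pos {q zm zp : ℝ} (hq0 : 0 < q) (hzm : zm < 0) {x : ℝ}
    (hx : x ∈ Lambda q zm zp) (h : 0 < x) : ∃ m : ℤ, x = zp * q ^ m := by
  rcases hx with ⟨m, rfl⟩ | h
  · have := mul_neg_of_neg_of_pos hzm (zpow_pos hq0 m); linarith
  · exact h

lemma lam_neg {q zm zp : ℝ} (hq0 : 0 < q) (hzp : 0 < zp) {x : ℝ}
    (hx : x ∈ Lambda q zm zp) (h : x < 0) : ∃ m : ℤ, x = zm * q ^ m := by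
  rcases hx with h | ⟨m, rfl⟩
  · exact h
  · have := mul_pos hzp (zpow_pos hq0 m); linarith

lemma orb_iff {q zm zp : ℝ} (hq0 : 0 < q) (hq1 : q < 1) (hzm : zm < 0) (hzp : 0 < zp)
    {x : ℝ} (hx : x ∈ Lambda q zm zp) (y : ℝ) :
    (∃ n : ℕ, y = x * q ^ n) ↔ y ∈ Lambda q zm zp ∧ ((0 < y ∧ y ≤ x) ∨ (x ≤ y ∧ y < 0)) := by
  constructor
  · rintro ⟨n, rfl⟩
    have h1 : 0 < q ^ n := pow_pos hq0 n
    have h2 : q ^ n ≤ 1 := pow_le_one₀ hq0.le hq1.le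
    refine ⟨?_, ?_⟩
    · rcases hx with ⟨m, rfl⟩ | ⟨m, rfl⟩
      · left; exact ⟨m + n, by rw [zpow_add₀ hq0.ne', zpow_natCast]; ring⟩
      · right; exact ⟨m + n, by rw [zpow_add₀ hq0.ne', zpow_natCast]; ring⟩
    · rcases lt_or_gt_of_ne (lam_ne hq0 hzm hzp hx) with h | h
      · right; constructor <;> nlinarith
      · left; constructor
        · positivity
        · nlinarith
  · rintro ⟨hy, ⟨h0, h⟩ | ⟨h, h0⟩⟩
    · obtain ⟨m, rfl⟩ := lam_pos hq0 hzm hy h0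
      obtain ⟨n, rfl⟩ := lam_pos hq0 hzm hx (h0.trans_le h)
      exact orb_of_pow hq0 ((zpow_le_iff' hq0 hq1 _ _).1 (le_of_mul_le_mul_left h hzp))
    · obtain ⟨m, rfl⟩ := lam_neg hq0 hzp hy h0
      obtain ⟨n, rfl⟩ := lam_neg hq0 hzp hx (h.trans_lt h0)
      refine orb_of_pow hq0 ((zpow_le_iff' hq0 hq1 _ _).1 ?_)
      exact le_of_mul_le_mul_left (by linarith : (-zm) * q ^ m ≤ (-zm) * q ^ n) (by linarith)

lemma gap {q zm zp : ℝ} (hq0 : 0 < q) (hq1 : q < 1) (hzm : zm < 0) (hzp : 0 < zp)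
    {x y : ℝ} (hx : x ∈ Lambda q zm zp) (hy : y ∈ Lambda q zm zp)
    (h : (0 < y ∧ y < x) ∨ (x < y ∧ y < 0)) : |y| ≤ q * |x| := by
  obtain ⟨n, rfl⟩ := (orb_iff hq0 hq1 hzm hzp hx y).2 ⟨hy, by
    rcases h with ⟨a, b⟩ | ⟨a, b⟩
    · exact Or.inl ⟨a, b.le⟩
    · exact Or.inr ⟨a.le, b⟩⟩
  rcases n with _ | n
  · simp at h
  · rw [abs_mul, abs_pow, abs_of_pos hq0, pow_succ]
    have h2 : q ^ n ≤ 1 := pow_le_one₀ hq0.le hq1.le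
    have := mul_nonneg hq0.le (abs_nonneg x)
    nlinarith

lemma hasSum_congr_fun {α : Type} {f g : α → ℝ} {a : ℝ} (h : HasSum f a)
    (e : ∀ n, g n = f n) : HasSum g a := by
  rw [show g = f from funext e]; exact h

lemma orb_hasSum {q : ℝ} (hq0 : 0 < q) (hq1 : q < 1) {x : ℝ} (hx : x ≠ 0) (l : ℕ) :
    HasSum (fun y : ℝ => if ∃ n : ℕ, y = x * q ^ n then y ^ (l+1) else 0)
      (x ^ (l+1) / (1 - q ^ (l+1))) := by
  have hinj : Function.Injective (fun n : ℕ => x * q ^ n) := by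
    intro a b h
    exact (pow_right_strictAnti₀ hq0 hq1).injective (mul_left_cancel₀ hx h)
  rw [← hinj.hasSum_iff]
  · have := (hasSum_geometric_of_lt_one (r := q ^ (l+1)) (by positivity)
      (pow_lt_one₀ hq0.le hq1 (by omega))).mul_left (x ^ (l+1))
    rw [← div_eq_mul_inv] at this
    refine hasSum_congr_fun this fun n => ?_
    simp only [Function.comp]
    rw [if_pos ⟨n, rfl⟩]; ring
  · intro y hy
    rw [if_neg]
    rintro ⟨n, rfl⟩
    exact hy ⟨n, rfl⟩

lemma mem_lam_of_mem {q zm zp a b y : ℝ} (h : y ∈ qInterval q zm zp a b) :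
    y ∈ Lambda q zm zp := by
  unfold qInterval at h
  split_ifs at h <;> exact h.2

lemma mem_Icc_of_mem {q zm zp a b y : ℝ} (h : y ∈ qInterval q zm zp a b) :
    a ≤ y ∧ y ≤ b := by
  unfold qInterval at h
  split_ifs at h
  · exact ⟨h.1.1, h.1.2.le⟩
  · exact ⟨h.1.1, h.1.2⟩
  · exact ⟨h.1.1.le, h.1.2⟩

lemma int_hasSum {q zm zp : ℝ} (hq0 : 0 < q) (hq1 : q < 1) (hzm : zm < 0) (hzp : 0 < zp)
    {a b : ℝ} (ha : a ∈ Lambda q zm zp) (hb : b ∈ Lambda q zm zp) (hab : a < b) (l : ℕ) :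
    HasSum (fun y : ℝ => if y ∈ qInterval q zm zp a b then |y| * y ^ l else 0)
      ((b ^ (l+1) - a ^ (l+1)) / (1 - q ^ (l+1))) := by
  have ha0 := lam_ne hq0 hzm hzp ha
  have hb0 := lam_ne hq0 hzm hzp hb
  have := (orb_hasSum hq0 hq1 hb0 l).sub (orb_hasSum hq0 hq1 ha0 l)
  rw [← sub_div] at this
  refine hasSum_congr_fun this fun y => ?_
  simp only [orb_iff hq0 hq1 hzm hzp ha, orb_iff hq0 hq1 hzm hzp hb]
  by_cases hy : y ∈ Lambda q zm zp
  swap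
  · rw [if_neg (fun h => hy (mem_lam_of_mem h))]; simp [hy]
  have hy0 := lam_ne hq0 hzm hzp hy
  unfold qInterval
  simp only [hy, true_and]
  rcases lt_or_gt_of_ne hy0 with h | h
  · rw [abs_of_neg h, pow_succ]
    have e1 : ¬ 0 < y := by linarith
    simp only [e1, false_and, false_or, h, and_true]
    rcases lt_or_gt_of_ne hb0 with h' | h'
    · rw [if_pos h']
      simp only [Set.mem_inter_iff, hy, and_true, Set.mem_Ico]
      by_cases c1 : a ≤ y <;> by_cases c2 : b ≤ y
      · simp [c1, c2]
      · simp [c1, c2, not_le.1 c2]; ring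
      · linarith
      · simp [c1, c2]
    · have c2 : ¬ b ≤ y := by linarith
      rw [if_neg (not_lt.2 h'.le)]
      rcases lt_or_gt_of_ne ha0 with h'' | h''
      · rw [if_pos h'']
        have : y ≤ b := by linarith
        by_cases c1 : a ≤ y
        · simp [hy, c1, c2, this]; ring
        · simp [c1, c2]
      · rw [if_neg (not_lt.2 h''.le)]
        have c1 : ¬ a ≤ y := by linarith
        have c3 : ¬ a < y := by linarith
        simp [c1, c2, c3]
  · rw [abs_of_pos h, pow_succ]
    have e1 : ¬ y < 0 := by linarith
    simp only [e1, and_false, or_false, h, true_and]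
    rcases lt_or_gt_of_ne hb0 with h' | h'
    · rw [if_pos h']
      have c1 : ¬ y < b := by linarith
      have c2 : ¬ y ≤ b := by linarith
      have c3 : ¬ y ≤ a := by linarith
      simp [c1, c2, c3]
    · rw [if_neg (not_lt.2 h'.le)]
      rcases lt_or_gt_of_ne ha0 with h'' | h''
      · rw [if_pos h'']
        have c1 : ¬ y ≤ a := by linarith
        have c3 : a ≤ y := by linarith
        by_cases c2 : y ≤ b
        · simp [hy, c1, c2, c3]; ring
        · simp [c1, c2]
      · rw [if_neg (not_lt.2 h''.le)]
        by_cases c1 : y ≤ a <;> by_cases c2 : y ≤ b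
        · simp [c1, c2, not_lt.2 c1]
        · linarith
        · simp [hy, c1, c2, not_le.1 c1]; ring
        · simp [c1, c2]

lemma vprod_eq {N : ℕ} (x : Fin N → ℝ) : vprod x = (Matrix.vandermonde x).det := by
  rw [Matrix.det_vandermonde, vprod, Finset.prod_sigma']
  refine Finset.prod_bij' (fun p _ => ⟨p.1, p.2⟩) (fun p _ => (p.1, p.2)) ?_ ?_ ?_ ?_ ?_ <;> simp

lemma det_diff {M : ℕ} (x : Fin (M+1) → ℝ) :
    (Matrix.of fun i l : Fin M => x i.succ ^ ((l:ℕ)+1) - x i.castSucc ^ ((l:ℕ)+1)).det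
      = vprod x := by
  rw [vprod_eq]
  symm
  rw [Matrix.det_eq_of_forall_row_eq_smul_add_pred (B := Matrix.of fun i j : Fin (M+1) =>
    Fin.cases (x 0 ^ (j:ℕ)) (fun i => x i.succ ^ (j:ℕ) - x i.castSucc ^ (j:ℕ)) i) (fun _ => 1)]
  · rw [Matrix.det_succ_column_zero, Fin.sum_univ_succ]
    simp
    rfl
  · intro j; simp [Matrix.vandermonde]
  · intro i j; simp [Matrix.vandermonde]

lemma vprod_nonneg {N : ℕ} {y : Fin N → ℝ} (h : Monotone y) : 0 ≤ vprod y := by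
  refine Finset.prod_nonneg fun p hp => ?_
  simp at hp
  exact sub_nonneg.2 (h hp.le)

lemma vprod_pos {N : ℕ} {y : Fin N → ℝ} (h : StrictMono y) : 0 < vprod y := by
  refine Finset.prod_pos fun p hp => ?_
  simp at hp
  exact sub_pos.2 (h hp)

lemma mono_of_inter {q zm zp : ℝ} {M : ℕ} {x : Fin (M+1) → ℝ} (hx : StrictMono x)
    {y : Fin M → ℝ} (hy : ∀ i : Fin M, y i ∈ qInterval q zm zp (x i.castSucc) (x i.succ)) :
    Monotone y := by
  intro i j hij
  rcases hij.eq_or_lt with rfl | h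
  · exact le_rfl
  · calc y i ≤ x i.succ := (mem_Icc_of_mem (hy i)).2
      _ ≤ x j.castSucc := hx.monotone (by rw [Fin.le_def]; simp; exact h)
      _ ≤ y j := (mem_Icc_of_mem (hy j)).1

lemma qpoch_pos {q : ℝ} (hq0 : 0 < q) (hq1 : q < 1) (M : ℕ) : 0 < qpochR q q M := by
  refine Finset.prod_pos fun m _ => ?_
  rw [← pow_succ']
  exact sub_pos.2 (pow_lt_one₀ hq0.le hq1 (by omega))

lemma Wt_nonneg {q zm zp : ℝ} (hq0 : 0 < q) (hq1 : q < 1) {M : ℕ} {x : Fin (M+1) → ℝ}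
    (hx : StrictMono x) (y : Fin M → ℝ) : 0 ≤ Wt q zm zp x y := by
  unfold Wt
  split_ifs with h
  · have h1 := vprod_pos hx
    have h2 := vprod_nonneg (mono_of_inter hx h)
    have h3 := qpoch_pos hq0 hq1 M
    have h4 : 0 ≤ ∏ i, |y i| := Finset.prod_nonneg fun i _ => abs_nonneg _
    positivity
  · exact le_rfl

lemma Wt_eq_det {q zm zp : ℝ} {M : ℕ} (x : Fin (M+1) → ℝ) (y : Fin M → ℝ) :
    Wt q zm zp x y = qpochR q q M / vprod x * (Matrix.of fun i l : Fin M =>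
      if y i ∈ qInterval q zm zp (x i.castSucc) (x i.succ) then |y i| * y i ^ (l:ℕ) else 0).det := by
  unfold Wt
  split_ifs with h
  · have : (Matrix.of fun i l : Fin M =>
      if y i ∈ qInterval q zm zp (x i.castSucc) (x i.succ) then |y i| * y i ^ (l:ℕ) else 0)
      = Matrix.of fun i l => |y i| * Matrix.vandermonde y i l := by
      ext i l; simp [h i, Matrix.vandermonde]
    rw [this, Matrix.det_mul_column, ← vprod_eq]; ring
  · push Not at h
    obtain ⟨i, hi⟩ := h
    rw [Matrix.det_eq_zero_of_row_eq_zero i]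
    · simp
    · intro j; simp [hi]

lemma total_le {q zm zp : ℝ} (hq0 : 0 < q) (hq1 : q < 1) (hzm : zm < 0) (hzp : 0 < zp)
    {M : ℕ} {x : Fin (M+1) → ℝ} (hx : StrictMono x) (hl : ∀ i, x i ∈ Lambda q zm zp)
    (S : Finset (Fin M → ℝ)) : ∑ y ∈ S, Wt q zm zp x y ≤ 1 := by
  set R : (i : Fin M) → ℝ → (Fin M → ℝ) := fun i z l =>
    if z ∈ qInterval q zm zp (x i.castSucc) (x i.succ) then |z| * z ^ (l:ℕ) else 0 with hR
  set F : Filter (Fin M → Finset ℝ) := Filter.pi fun _ => Filter.atTop with hF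
  have hlim : Filter.Tendsto (fun A : Fin M → Finset ℝ =>
      qpochR q q M / vprod x * (Matrix.of fun i l => ∑ z ∈ A i, R i z l).det) F
      (nhds (qpochR q q M / vprod x * (Matrix.of fun i l : Fin M =>
        (x i.succ ^ ((l:ℕ)+1) - x i.castSucc ^ ((l:ℕ)+1)) / (1 - q ^ ((l:ℕ)+1))).det)) := by
    refine Filter.Tendsto.const_mul _ ?_
    have hc : Continuous (fun A : Matrix (Fin M) (Fin M) ℝ => A.det) := continuous_id.matrix_det
    refine (hc.tendsto _).comp ?_
    refine tendsto_pi_nhds.2 fun i => tendsto_pi_nhds.2 fun l => ?_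
    have h1 := int_hasSum hq0 hq1 hzm hzp (hl i.castSucc) (hl i.succ)
      (hx (Fin.castSucc_lt_succ)) l
    have h2 : Filter.Tendsto _ Filter.atTop _ := h1
    exact h2.comp (Filter.tendsto_eval_pi (fun _ : Fin M => (Filter.atTop : Filter (Finset ℝ))) i)
  have hval : qpochR q q M / vprod x * (Matrix.of fun i l : Fin M =>
        (x i.succ ^ ((l:ℕ)+1) - x i.castSucc ^ ((l:ℕ)+1)) / (1 - q ^ ((l:ℕ)+1))).det = 1 := by
    have := Matrix.det_mul_row (fun l : Fin M => (1 - q ^ ((l:ℕ)+1))⁻¹) (Matrix.of fun i l : Fin M => x i.succ ^ ((l:ℕ)+1) - x i.castSucc ^ ((l:ℕ)+1))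
    rw [det_diff] at this
    have e : (Matrix.of fun i l : Fin M =>
        (x i.succ ^ ((l:ℕ)+1) - x i.castSucc ^ ((l:ℕ)+1)) / (1 - q ^ ((l:ℕ)+1))) =
        Matrix.of fun i l : Fin M => (1 - q ^ ((l:ℕ)+1))⁻¹ * (Matrix.of fun i l : Fin M => x i.succ ^ ((l:ℕ)+1) - x i.castSucc ^ ((l:ℕ)+1)) i l := by
      ext i l; simp; ring
    rw [e, this]
    have e2 : qpochR q q M = ∏ l : Fin M, (1 - q ^ ((l:ℕ)+1)) := by
      rw [qpochR, Finset.prod_range]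
      refine Finset.prod_congr rfl fun l _ => ?_
      rw [pow_succ']
    rw [Finset.prod_inv_distrib, ← e2]
    have := (vprod_pos hx).ne'
    have := (qpoch_pos hq0 hq1 M).ne'
    field_simp
  rw [hval] at hlim
  have hsum : ∀ A : Fin M → Finset ℝ, qpochR q q M / vprod x *
      (Matrix.of fun i l => ∑ z ∈ A i, R i z l).det
      = ∑ y ∈ Fintype.piFinset A, Wt q zm zp x y := by
    intro A
    have := (Matrix.detRowAlternating (n := Fin M) (R := ℝ)).toMultilinearMap.map_sum_finset R A
    simp only [Wt_eq_det]
    rw [← Finset.mul_sum]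
    congr 1
    refine Eq.trans ?_ this
    change Matrix.det _ = Matrix.det _
    congr 1
    ext i l
    simp
  simp only [hsum] at hlim
  have : F.NeBot := by rw [hF]; infer_instance
  refine ge_of_tendsto hlim ?_
  have hev : ∀ᶠ A in F, ∀ i : Fin M, S.image (fun y => y i) ≤ A i := by
    rw [Filter.eventually_all]
    intro i
    exact (Filter.tendsto_eval_pi (fun _ : Fin M => (Filter.atTop : Filter (Finset ℝ))) i).eventually_ge_atTop _
  filter_upwards [hev] with A hA
  refine Finset.sum_le_sum_of_subset_of_nonneg ?_ fun y _ _ => Wt_nonneg hq0 hq1 hx y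
  intro y hy
  rw [Fintype.mem_piFinset]
  exact fun i => hA i (Finset.mem_image_of_mem _ hy)

lemma side_sum {q zm zp : ℝ} (hq0 : 0 < q) (hq1 : q < 1) (hzm : zm < 0) (hzp : 0 < zp)
    {δ s : ℝ} (hδ : 0 ≤ δ) (Z : Finset ℝ) (hZ : ∀ z ∈ Z, z ∈ Lambda q zm zp ∧ |z| ≤ δ)
    (hs : (s = 1 ∧ ∀ z ∈ Z, 0 < z) ∨ (s = -1 ∧ ∀ z ∈ Z, z < 0)) :
    ∑ z ∈ Z, |z| ≤ δ / (1 - q) := by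
  have h1q : 0 < 1 - q := by linarith
  rcases Z.eq_empty_or_nonempty with rfl | hne
  · simp; positivity
  obtain ⟨z0, hz0, hmax⟩ := Finset.exists_max_image Z (fun z => |z|) hne
  have hsz : ∀ z ∈ Z, s * z = |z| := by
    rcases hs with ⟨rfl, h⟩ | ⟨rfl, h⟩ <;> intro z hz
    · rw [abs_of_pos (h z hz)]; ring
    · rw [abs_of_neg (h z hz)]; ring
  have horb : ∀ z ∈ Z, ∃ n : ℕ, z = z0 * q ^ n := by
    intro z hz
    rw [orb_iff hq0 hq1 hzm hzp (hZ z0 hz0).1]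
    refine ⟨(hZ z hz).1, ?_⟩
    have hm := hmax z hz
    rcases hs with ⟨rfl, h⟩ | ⟨rfl, h⟩
    · left
      refine ⟨h z hz, ?_⟩
      simpa [abs_of_pos (h z hz), abs_of_pos (h z0 hz0)] using hm
    · right
      refine ⟨?_, h z hz⟩
      simpa [abs_of_neg (h z hz), abs_of_neg (h z0 hz0)] using hm
  have hS := (orb_hasSum hq0 hq1 (lam_ne hq0 hzm hzp (hZ z0 hz0).1) 0).mul_left s
  have h2 := sum_le_hasSum Z (fun y _ => by
    split_ifs with h
    · obtain ⟨n, rfl⟩ := h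
      have := hsz z0 hz0
      rw [zero_add, pow_one, ← mul_assoc, this]
      positivity
    · simp) hS
  have h3 : ∑ z ∈ Z, |z| ≤ s * (z0 ^ (0+1) / (1 - q ^ (0+1))) := by
    refine le_trans (le_of_eq ?_) h2
    refine Finset.sum_congr rfl fun z hz => ?_
    rw [if_pos (horb z hz), zero_add, pow_one, hsz z hz]
  refine h3.trans ?_
  rw [zero_add, pow_one, pow_one, ← mul_div_assoc, hsz z0 hz0]
  exact div_le_div_of_nonneg_right (hZ z0 hz0).2 h1q.le

lemma lat_sum {q zm zp : ℝ} (hq0 : 0 < q) (hq1 : q < 1) (hzm : zm < 0) (hzp : 0 < zp)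
    {δ : ℝ} (hδ : 0 ≤ δ) (Z : Finset ℝ) (hZ : ∀ z ∈ Z, z ∈ Lambda q zm zp ∧ |z| ≤ δ) :
    ∑ z ∈ Z, |z| ≤ 2 / (1 - q) * δ := by
  rw [← Finset.sum_filter_add_sum_filter_not Z (fun z => 0 < z)]
  have h1 := side_sum hq0 hq1 hzm hzp (s := 1) hδ (Z.filter (fun z => 0 < z))
    (fun z hz => hZ z (Finset.mem_filter.1 hz).1)
    (Or.inl ⟨rfl, fun z hz => (Finset.mem_filter.1 hz).2⟩)
  have h2 := side_sum hq0 hq1 hzm hzp (s := -1) hδ (Z.filter (fun z => ¬ 0 < z))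
    (fun z hz => hZ z (Finset.mem_filter.1 hz).1)
    (Or.inr ⟨rfl, fun z hz => by
      obtain ⟨a, b⟩ := Finset.mem_filter.1 hz
      exact lt_of_le_of_ne (not_lt.1 b) (lam_ne hq0 hzm hzp (hZ z a).1)⟩)
  calc _ ≤ δ / (1 - q) + δ / (1 - q) := add_le_add h1 h2
    _ = _ := by ring

lemma vprod_compare {N : ℕ} {y y' : Fin N → ℝ} {D : ℝ} (B : Finset (Fin N × Fin N)) (n : ℕ)
    (hD : 1 ≤ D) (hB : B.card ≤ n) (hy : Monotone y) (hy' : Monotone y')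
    (h : ∀ a b : Fin N, a < b → y b - y a ≤ (if (a, b) ∈ B then D else 1) * (y' b - y' a)) :
    vprod y ≤ D ^ n * vprod y' := by
  have h1 : vprod y ≤ (∏ p ∈ Finset.univ.filter (fun p : Fin N × Fin N => p.1 < p.2),
      (if p ∈ B then D else 1)) * vprod y' := by
    unfold vprod
    rw [← Finset.prod_mul_distrib]
    refine Finset.prod_le_prod ?_ ?_
    · intro p hp; simp at hp; exact sub_nonneg.2 (hy hp.le)
    · intro p hp; simp at hp; exact h p.1 p.2 hp
  refine h1.trans (mul_le_mul_of_nonneg_right ?_ (vprod_nonneg hy'))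
  rw [Finset.prod_ite, Finset.prod_const, Finset.prod_const_one, mul_one]
  refine pow_le_pow_right₀ hD ((Finset.card_le_card ?_).trans hB)
  intro p hp
  exact (Finset.mem_filter.1 hp).2

lemma weight_compare {q zm zp : ℝ} (hq0 : 0 < q) (hq1 : q < 1) (hzm : zm < 0) (hzp : 0 < zp)
    {M : ℕ} {x : Fin (M+1) → ℝ} (hx : StrictMono x) (hl : ∀ i, x i ∈ Lambda q zm zp)
    (j : Fin M) (t : ℝ) (n : ℕ)
    (hside : (0 < t ∧ t = x j.succ ∧ (Finset.univ.filter (fun i => j < i)).card ≤ n) ∨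
      (t < 0 ∧ t = x j.castSucc ∧ (Finset.univ.filter (fun i => i < j)).card ≤ n))
    (y : Fin M → ℝ) (hy : ∀ i : Fin M, y i ∈ qInterval q zm zp (x i.castSucc) (x i.succ))
    (hyt : |y j| ≤ |t|) :
    Wt q zm zp x y * |t| ≤ (2 / (1 - q)) ^ n * |y j| * Wt q zm zp x (Function.update y j t) := by
  have h1q : 0 < 1 - q := by linarith
  have hxj : x j.castSucc < x j.succ := hx Fin.castSucc_lt_succ
  have ht : t ∈ qInterval q zm zp (x j.castSucc) (x j.succ) := by
    unfold qInterval
    rcases hside with ⟨h0, h, -⟩ | ⟨h0, h, -⟩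
    · rw [if_neg (by rw [← h]; exact not_lt.2 h0.le)]
      split_ifs
      · exact ⟨⟨h ▸ hxj.le, h.le⟩, h ▸ hl _⟩
      · exact ⟨⟨h ▸ hxj, h.le⟩, h ▸ hl _⟩
    · split_ifs with h1 h2
      · exact ⟨⟨h.ge, h ▸ hxj⟩, h ▸ hl _⟩
      · exact ⟨⟨h.ge, h ▸ hxj.le⟩, h ▸ hl _⟩
      · exact absurd (h ▸ h0) h2
  set y' := Function.update y j t with hy'def
  have hy' : ∀ i : Fin M, y' i ∈ qInterval q zm zp (x i.castSucc) (x i.succ) := by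
    intro i
    by_cases h : i = j
    · subst h; simpa [hy'def] using ht
    · simpa [hy'def, h] using hy i
  have hm := mono_of_inter hx hy
  have hm' := mono_of_inter hx hy'
  have hD : 1 ≤ 2 / (1 - q) := by rw [le_div_iff₀ h1q]; linarith
  have hyj := mem_Icc_of_mem (hy j)
  have hv : vprod y ≤ (2 / (1 - q)) ^ n * vprod y' := by
    rcases hside with ⟨h0, h, hc⟩ | ⟨h0, h, hc⟩
    · refine vprod_compare ((Finset.univ.filter (fun i => j < i)).image (fun i => (j, i))) n hD
        (Finset.card_image_le.trans hc) hm hm' ?_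
      intro a b hab
      by_cases ha : a = j
      · subst ha
        rw [if_pos (by simpa using hab)]
        have e1 : y' a = t := by simp [hy'def]
        have e2 : y' b = y b := by simp [hy'def, hab.ne']
        rw [e1, e2]
        have hb := hy b
        have hle : t ≤ x b.castSucc := by
          rw [h]; exact hx.monotone (by rw [Fin.le_def]; simp; exact hab)
        have hpos : 0 < x b.castSucc := h0.trans_le hle
        have hpos' : 0 < x b.succ := hpos.trans (hx Fin.castSucc_lt_succ)
        unfold qInterval at hb
        rw [if_neg (not_lt.2 hpos'.le), if_neg (not_lt.2 hpos.le)] at hb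
        have hlt : t < y b := hle.trans_lt hb.1.1
        have hg := gap hq0 hq1 hzm hzp hb.2 (h ▸ hl _ : t ∈ Lambda q zm zp) (Or.inl ⟨h0, hlt⟩)
        rw [abs_of_pos h0, abs_of_pos (h0.trans hlt)] at hg
        rw [abs_of_pos h0] at hyt
        have := neg_abs_le (y a)
        rw [div_mul_eq_mul_div, le_div_iff₀ h1q]
        have : y b - y a ≤ 2 * y b := by linarith
        have h5 : (1 - q) * y b ≤ y b - t := by linarith
        nlinarith
      · have hnm : (a, b) ∉ (Finset.univ.filter (fun i => j < i)).image (fun i => (j, i)) := by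
          simp; intro _ h; exact absurd h.symm ha
        rw [if_neg hnm, one_mul]
        have e1 : y' a = y a := by simp [hy'def, ha]
        rw [e1]
        by_cases hb : b = j
        · subst hb
          have e2 : y' b = t := by simp [hy'def]
          rw [e2, h]; linarith
        · have e2 : y' b = y b := by simp [hy'def, hb]
          rw [e2]
    · refine vprod_compare ((Finset.univ.filter (fun i => i < j)).image (fun i => (i, j))) n hD
        (Finset.card_image_le.trans hc) hm hm' ?_
      intro a b hab
      by_cases hbj : b = j
      · subst hbj
        rw [if_pos (by simpa using hab)]
        have e1 : y' b = t := by simp [hy'def]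
        have e2 : y' a = y a := by simp [hy'def, hab.ne]
        rw [e1, e2]
        have hb := hy a
        have hle : x a.succ ≤ t := by
          rw [h]; exact hx.monotone (by rw [Fin.le_def]; simp; exact hab)
        have hneg : x a.succ < 0 := hle.trans_lt h0
        unfold qInterval at hb
        rw [if_pos hneg] at hb
        have hlt : y a < t := hb.1.2.trans_le hle
        have hg := gap hq0 hq1 hzm hzp hb.2 (h ▸ hl _ : t ∈ Lambda q zm zp) (Or.inr ⟨hlt, h0⟩)
        rw [abs_of_neg h0, abs_of_neg (hlt.trans h0)] at hg
        rw [abs_of_neg h0] at hyt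
        have := le_abs_self (y b)
        rw [div_mul_eq_mul_div, le_div_iff₀ h1q]
        have : y b - y a ≤ 2 * (- y a) := by linarith
        have h5 : (1 - q) * (- y a) ≤ t - y a := by linarith
        nlinarith
      · have hnm : (a, b) ∉ (Finset.univ.filter (fun i => i < j)).image (fun i => (i, j)) := by
          simp; intro _ h; exact absurd h.symm hbj
        rw [if_neg hnm, one_mul]
        have e1 : y' b = y b := by simp [hy'def, hbj]
        rw [e1]
        by_cases ha : a = j
        · subst ha
          have e2 : y' a = t := by simp [hy'def]
          rw [e2, h]; linarith
        · have e2 : y' a = y a := by simp [hy'def, ha]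
          rw [e2]
  have hprod : (∏ i, |y i|) * |t| = |y j| * ∏ i, |y' i| := by
    rw [← Finset.mul_prod_erase _ _ (Finset.mem_univ j),
      ← Finset.mul_prod_erase _ (fun i => |y' i|) (Finset.mem_univ j)]
    have e1 : y' j = t := by simp [hy'def]
    have e2 : ∏ i ∈ Finset.univ.erase j, |y' i| = ∏ i ∈ Finset.univ.erase j, |y i| := by
      refine Finset.prod_congr rfl fun i hi => ?_
      simp [hy'def, Finset.ne_of_mem_erase hi]
    rw [e1, e2]; ring
  unfold Wt
  rw [if_pos hy, if_pos hy']
  have hX := vprod_pos hx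
  have hQ := qpoch_pos hq0 hq1 M
  have hnn : 0 ≤ |y j| * ∏ i, |y' i| :=
    mul_nonneg (abs_nonneg _) (Finset.prod_nonneg fun i _ => abs_nonneg _)
  calc (∏ i, |y i|) * qpochR q q M * vprod y / vprod x * |t|
      = ((∏ i, |y i|) * |t|) * (qpochR q q M / vprod x) * vprod y := by ring
    _ = (|y j| * ∏ i, |y' i|) * (qpochR q q M / vprod x) * vprod y := by rw [hprod]
    _ ≤ (|y j| * ∏ i, |y' i|) * (qpochR q q M / vprod x) * ((2 / (1 - q)) ^ n * vprod y') :=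
        mul_le_mul_of_nonneg_left hv (by positivity)
    _ = _ := by ring

lemma sum_core {q zm zp : ℝ} (hq0 : 0 < q) (hq1 : q < 1) (hzm : zm < 0) (hzp : 0 < zp)
    {M : ℕ} {x : Fin (M+1) → ℝ} (hx : StrictMono x) (hl : ∀ i, x i ∈ Lambda q zm zp)
    (j : Fin M) (t : ℝ) (n : ℕ)
    (hside : (0 < t ∧ t = x j.succ ∧ (Finset.univ.filter (fun i => j < i)).card ≤ n) ∨
      (t < 0 ∧ t = x j.castSucc ∧ (Finset.univ.filter (fun i => i < j)).card ≤ n))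
    (S : Finset (Fin M → ℝ)) (η : ℝ) (hη : 0 ≤ η) (hη1 : η ≤ 1)
    (hS : ∀ y ∈ S, |y j| ≤ η * |t|) :
    ∑ y ∈ S, Wt q zm zp x y ≤ (2 / (1 - q)) ^ (n + 1) * η := by
  have h1q : 0 < 1 - q := by linarith
  have ht0 : 0 < |t| := by
    rcases hside with ⟨h, -⟩ | ⟨h, -⟩
    · exact abs_pos.2 h.ne'
    · exact abs_pos.2 h.ne
  set T := S.filter (fun y => ∀ i : Fin M, y i ∈ qInterval q zm zp (x i.castSucc) (x i.succ))
    with hT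
  have hST : ∑ y ∈ S, Wt q zm zp x y = ∑ y ∈ T, Wt q zm zp x y := by
    symm
    refine Finset.sum_subset (Finset.filter_subset _ _) fun y hy hy' => ?_
    unfold Wt
    rw [if_neg]
    intro h
    exact hy' (Finset.mem_filter.2 ⟨hy, h⟩)
  rw [hST]
  have hTS : ∀ y ∈ T, |y j| ≤ η * |t| := fun y hy => hS y (Finset.mem_filter.1 hy).1
  set Z := T.image (fun y => y j) with hZ
  set U := T.image (fun y => Function.update y j t) with hU
  have key : (∑ y ∈ T, Wt q zm zp x y) * |t| ≤
      (2 / (1 - q)) ^ n * ((∑ z ∈ Z, |z|) * ∑ u ∈ U, Wt q zm zp x u) := by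
    rw [Finset.sum_mul]
    calc ∑ y ∈ T, Wt q zm zp x y * |t|
        ≤ ∑ y ∈ T, (2 / (1 - q)) ^ n * (|y j| * Wt q zm zp x (Function.update y j t)) := by
          refine Finset.sum_le_sum fun y hy => ?_
          rw [← mul_assoc]
          refine weight_compare hq0 hq1 hzm hzp hx hl j t n hside y (Finset.mem_filter.1 hy).2 ?_
          exact (hTS y hy).trans (mul_le_of_le_one_left ht0.le hη1)
      _ = (2 / (1 - q)) ^ n * ∑ y ∈ T, |y j| * Wt q zm zp x (Function.update y j t) := by
          rw [Finset.mul_sum]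
      _ ≤ _ := by
          refine mul_le_mul_of_nonneg_left ?_ (by positivity)
          rw [Finset.sum_mul_sum, ← Finset.sum_product']
          have hinj : Set.InjOn (fun y : Fin M → ℝ => (y j, Function.update y j t)) T := by
            intro y _ w _ h
            simp only [Prod.mk.injEq] at h
            ext i
            by_cases hi : i = j
            · rw [hi]; exact h.1
            · have := congrFun h.2 i
              simpa [hi] using this
          rw [← Finset.sum_image (s := T) (g := fun y : Fin M → ℝ => (y j, Function.update y j t))
            (f := fun p : ℝ × (Fin M → ℝ) => |p.1| * Wt q zm zp x p.2) hinj]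
          refine Finset.sum_le_sum_of_subset_of_nonneg ?_ ?_
          · intro p hp
            obtain ⟨y, hy, rfl⟩ := Finset.mem_image.1 hp
            exact Finset.mem_product.2 ⟨Finset.mem_image_of_mem _ hy,
              Finset.mem_image_of_mem (fun y => Function.update y j t) hy⟩
          · intro p _ _
            exact mul_nonneg (abs_nonneg _) (Wt_nonneg hq0 hq1 hx _)
  have hz : ∑ z ∈ Z, |z| ≤ 2 / (1 - q) * (η * |t|) := by
    refine lat_sum hq0 hq1 hzm hzp (by positivity) Z fun z hz => ?_
    obtain ⟨y, hy, rfl⟩ := Finset.mem_image.1 hz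
    exact ⟨mem_lam_of_mem ((Finset.mem_filter.1 hy).2 j), hTS y hy⟩
  have hu := total_le hq0 hq1 hzm hzp hx hl U
  have hu0 : 0 ≤ ∑ u ∈ U, Wt q zm zp x u := Finset.sum_nonneg fun u _ => Wt_nonneg hq0 hq1 hx u
  have h6 : (∑ z ∈ Z, |z|) * ∑ u ∈ U, Wt q zm zp x u ≤ 2 / (1 - q) * (η * |t|) := by
    calc _ ≤ (∑ z ∈ Z, |z|) * 1 := mul_le_mul_of_nonneg_left hu (Finset.sum_nonneg fun _ _ => abs_nonneg _)
      _ ≤ _ := by rw [mul_one]; exact hz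
  refine le_of_mul_le_mul_right ?_ ht0
  calc _ ≤ _ := key
    _ ≤ (2 / (1 - q)) ^ n * (2 / (1 - q) * (η * |t|)) :=
        mul_le_mul_of_nonneg_left h6 (by positivity)
    _ = _ := by ring

lemma var_abs {N : ℕ} {v : Fin N → ℝ} (h : ∀ i j : Fin N, i < j → varLE (v j) (v i))
    {i j : Fin N} (hij : i ≤ j) : |v j| ≤ |v i| := by
  rcases hij.eq_or_lt with rfl | hlt
  · exact le_rfl
  · rcases h i j hlt with h | h
    · exact h.le
    · exact h.1.le

lemma card_upper {q zm zp : ℝ} {M k : ℕ} (hk : 1 ≤ k) (hM : k ≤ M) (X : Conf q zm zp (M+1))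
    (v : Fin (M+1) → ℝ) (hv : IsVarSeries q zm zp X v) :
    (Finset.univ.filter (fun p => |v ⟨k-1, by omega⟩| ≤ |X.1 p|)).card ≤ k + 1 := by
  obtain ⟨⟨σ, hσ⟩, hord⟩ := hv
  have hsub : Finset.univ.filter (fun p => |v ⟨k-1, by omega⟩| ≤ |X.1 p|) ⊆
      (Finset.Iic (⟨k, by omega⟩ : Fin (M+1))).image σ := by
    intro p hp
    simp only [Finset.mem_filter, Finset.mem_univ, true_and] at hp
    refine Finset.mem_image.2 ⟨σ.symm p, ?_, by simp⟩
    rw [Finset.mem_Iic]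
    by_contra hlt
    rw [not_le] at hlt
    have e : X.1 p = v (σ.symm p) := by simp [hσ]
    rw [e] at hp
    have a1 := var_abs hord hlt.le
    have a2 := var_abs hord (show (⟨k-1, by omega⟩ : Fin (M+1)) ≤ ⟨k, by omega⟩ by
      rw [Fin.le_def]; simp)
    have hinj : Function.Injective v := by
      rw [hσ]; exact X.2.1.injective.comp σ.injective
    have b1 : v (σ.symm p) ≠ v ⟨k, by omega⟩ := fun h => hlt.ne' (hinj h)
    have b2 : v ⟨k-1, by omega⟩ ≠ v ⟨k, by omega⟩ := fun h => by
      have := congrArg Fin.val (hinj h); simp at this; omega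
    have b3 : v (σ.symm p) ≠ v ⟨k-1, by omega⟩ := fun h => by
      have := congrArg Fin.val (hinj h)
      rw [Fin.lt_def] at hlt
      simp at this hlt; omega
    have c1 : |v (σ.symm p)| = |v ⟨k, by omega⟩| := by linarith
    have c2 : |v ⟨k-1, by omega⟩| = |v ⟨k, by omega⟩| := by linarith
    rcases abs_eq_abs.1 c1 with h | h
    · exact b1 h
    rcases abs_eq_abs.1 c2 with h' | h'
    · exact b2 h'
    exact b3 (h.trans h'.symm)
  calc _ ≤ _ := Finset.card_le_card hsub
    _ ≤ _ := Finset.card_image_le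
    _ = k + 1 := by simp

lemma card_lower {q zm zp : ℝ} {M k : ℕ} (hk : 1 ≤ k) (hM : k ≤ M) (X : Conf q zm zp (M+1))
    (v : Fin (M+1) → ℝ) (hv : IsVarSeries q zm zp X v) :
    k ≤ (Finset.univ.filter (fun p => |v ⟨k-1, by omega⟩| ≤ |X.1 p|)).card := by
  obtain ⟨⟨σ, hσ⟩, hord⟩ := hv
  have hsub : (Finset.Iio (⟨k, by omega⟩ : Fin (M+1))).image σ ⊆
      Finset.univ.filter (fun p => |v ⟨k-1, by omega⟩| ≤ |X.1 p|) := by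
    intro p hp
    obtain ⟨p', hp', rfl⟩ := Finset.mem_image.1 hp
    simp only [Finset.mem_filter, Finset.mem_univ, true_and]
    have e : X.1 (σ p') = v p' := by simp [hσ]
    rw [e]
    refine var_abs hord ?_
    rw [Finset.mem_Iio, Fin.lt_def] at hp'
    rw [Fin.le_def]; simp at hp' ⊢; omega
  have := Finset.card_le_card hsub
  rw [Finset.card_image_of_injective _ σ.injective] at this
  simpa using this

lemma card_Y {q zm zp : ℝ} {M k : ℕ} (hk : 1 ≤ k) (hM : k ≤ M) (Y : Conf q zm zp M)
    (v : Fin M → ℝ) (hv : IsVarSeries q zm zp Y v) {δ : ℝ} (hδ : |v ⟨k-1, by omega⟩| ≤ δ) :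
    (Finset.univ.filter (fun i => δ < |Y.1 i|)).card < k := by
  obtain ⟨⟨σ, hσ⟩, hord⟩ := hv
  have hsub : Finset.univ.filter (fun i => δ < |Y.1 i|) ⊆
      (Finset.Iio (⟨k-1, by omega⟩ : Fin M)).image σ := by
    intro p hp
    simp only [Finset.mem_filter, Finset.mem_univ, true_and] at hp
    refine Finset.mem_image.2 ⟨σ.symm p, ?_, by simp⟩
    rw [Finset.mem_Iio]
    by_contra hlt
    rw [not_lt] at hlt
    have e : Y.1 p = v (σ.symm p) := by simp [hσ]
    rw [e] at hp
    have a1 := var_abs hord hlt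
    linarith
  have : (Finset.univ.filter (fun i => δ < |Y.1 i|)).card ≤ k - 1 := by
    calc _ ≤ _ := Finset.card_le_card hsub
      _ ≤ _ := Finset.card_image_le
      _ = k - 1 := by simp
  omega

lemma exists_bad {M k : ℕ} (hM : k ≤ M) {x : Fin (M+1) → ℝ} (hx : StrictMono x) {r δ : ℝ}
    (hc : k ≤ (Finset.univ.filter (fun p => r ≤ |x p|)).card) (y : Fin M → ℝ)
    (hy : (Finset.univ.filter (fun i => δ < |y i|)).card < k) :
    ∃ j : Fin M, (r ≤ x j.succ ∨ x j.castSucc ≤ -r) ∧ |y j| ≤ δ := by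
  by_contra hcon
  push Not at hcon
  set G := Finset.univ.filter (fun j : Fin M => r ≤ x j.succ ∨ x j.castSucc ≤ -r) with hG
  have hGk : k ≤ G.card := by
    by_cases hall : ∀ j : Fin M, r ≤ x j.succ ∨ x j.castSucc ≤ -r
    · have : G = Finset.univ := by rw [hG]; exact Finset.filter_true_of_mem fun j _ => hall j
      rw [this]; simpa using hM
    · push Not at hall
      obtain ⟨i0, h1, h2⟩ := hall
      refine hc.trans ((Finset.card_le_card ?_).trans (Finset.card_image_le (s := G)
        (f := fun i : Fin M => if i < i0 then i.castSucc else i.succ)))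
      intro p hp
      simp only [Finset.mem_filter, Finset.mem_univ, true_and] at hp
      rcases le_or_gt p i0.castSucc with hle | hgt
      · have hxp := hx.monotone hle
        have h3 : x i0.castSucc < x i0.succ := hx Fin.castSucc_lt_succ
        have hneg : x p ≤ -r := by
          rcases le_abs.1 hp with h | h <;> linarith
        have hlt : p < i0.castSucc := lt_of_le_of_ne hle fun h => by rw [h] at hneg; linarith
        have hv : (p : ℕ) < i0 := by simpa [Fin.lt_def] using hlt
        refine Finset.mem_image.2 ⟨⟨p, by omega⟩, ?_, ?_⟩
        · rw [hG, Finset.mem_filter]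
          exact ⟨Finset.mem_univ _, Or.inr hneg⟩
        · rw [if_pos (by simpa [Fin.lt_def] using hv)]; rfl
      · have hge : i0.succ ≤ p := by
          rw [Fin.lt_def] at hgt; rw [Fin.le_def]; simp at hgt ⊢; omega
        have hxp := hx.monotone hge
        have h3 : x i0.castSucc < x i0.succ := hx Fin.castSucc_lt_succ
        have hpos : r ≤ x p := by
          rcases le_abs.1 hp with h | h <;> linarith
        have hlt : i0.succ < p := lt_of_le_of_ne hge fun h => by rw [← h] at hpos; linarith
        have hv : (i0 : ℕ) + 1 < p := by simpa [Fin.lt_def] using hlt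
        have hp2 := p.2
        have e : (⟨p - 1, by omega⟩ : Fin M).succ = p := by
          ext; simp; omega
        refine Finset.mem_image.2 ⟨⟨p - 1, by omega⟩, ?_, ?_⟩
        · rw [hG, Finset.mem_filter]
          exact ⟨Finset.mem_univ _, Or.inl (by rw [e]; exact hpos)⟩
        · rw [if_neg (by simp [Fin.lt_def]; omega)]; exact e
  have : G ⊆ Finset.univ.filter (fun i => δ < |y i|) := by
    intro j hj
    rw [hG, Finset.mem_filter] at hj
    exact Finset.mem_filter.2 ⟨Finset.mem_univ _, hcon j hj.2⟩
  have := Finset.card_le_card this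
  omega

lemma main_bound {q zm zp : ℝ} (hq0 : 0 < q) (hq1 : q < 1) (hzm : zm < 0) (hzp : 0 < zp)
    {M k : ℕ} (hM : k ≤ M) {x : Fin (M+1) → ℝ} (hx : StrictMono x)
    (hl : ∀ i, x i ∈ Lambda q zm zp) {r η : ℝ} (hr : 0 < r) (hη : 0 ≤ η) (hη1 : η ≤ 1)
    (hc : k ≤ (Finset.univ.filter (fun p => r ≤ |x p|)).card)
    (hc' : (Finset.univ.filter (fun p => r ≤ |x p|)).card ≤ k + 1)
    (S : Finset (Fin M → ℝ))
    (hS : ∀ y ∈ S, (Finset.univ.filter (fun i => η * r < |y i|)).card < k) :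
    ∑ y ∈ S, Wt q zm zp x y ≤ (2 * (k + 1)) * ((2 / (1 - q)) ^ (k + 2) * η) := by
  set A := Finset.univ.filter (fun j : Fin M => x j.castSucc ≤ -r) with hA
  set B := Finset.univ.filter (fun j : Fin M => r ≤ x j.succ) with hB
  have hAc : A.card ≤ k + 1 := by
    refine le_trans ?_ hc'
    rw [← Finset.card_image_of_injective A (Fin.castSucc_injective M)]
    refine Finset.card_le_card fun p hp => ?_
    obtain ⟨j, hj, rfl⟩ := Finset.mem_image.1 hp
    rw [hA, Finset.mem_filter] at hj
    exact Finset.mem_filter.2 ⟨Finset.mem_univ _, le_abs.2 (Or.inr (by linarith [hj.2]))⟩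
  have hBc : B.card ≤ k + 1 := by
    refine le_trans ?_ hc'
    rw [← Finset.card_image_of_injective B (Fin.succ_injective M)]
    refine Finset.card_le_card fun p hp => ?_
    obtain ⟨j, hj, rfl⟩ := Finset.mem_image.1 hp
    rw [hB, Finset.mem_filter] at hj
    exact Finset.mem_filter.2 ⟨Finset.mem_univ _, le_abs.2 (Or.inl hj.2)⟩
  have hbd : ∀ j ∈ A ∪ B, ∑ y ∈ S.filter (fun y => |y j| ≤ η * r), Wt q zm zp x y ≤
      (2 / (1 - q)) ^ (k + 2) * η := by
    intro j hj
    rcases Finset.mem_union.1 hj with hj | hj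
    · rw [hA, Finset.mem_filter] at hj
      have hneg : x j.castSucc < 0 := by linarith [hj.2]
      refine sum_core hq0 hq1 hzm hzp hx hl j (x j.castSucc) (k+1)
        (Or.inr ⟨hneg, rfl, (Finset.card_le_card fun i hi => ?_).trans hAc⟩) _ η hη hη1 ?_
      · rw [Finset.mem_filter] at hi
        rw [hA, Finset.mem_filter]
        exact ⟨Finset.mem_univ _, (hx.monotone (by
          rw [Fin.le_def]; simp; exact hi.2.le)).trans hj.2⟩
      · intro y hy
        refine (Finset.mem_filter.1 hy).2.trans (mul_le_mul_of_nonneg_left ?_ hη)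
        rw [abs_of_neg hneg]; linarith [hj.2]
    · rw [hB, Finset.mem_filter] at hj
      have hpos : 0 < x j.succ := by linarith [hj.2]
      refine sum_core hq0 hq1 hzm hzp hx hl j (x j.succ) (k+1)
        (Or.inl ⟨hpos, rfl, (Finset.card_le_card fun i hi => ?_).trans hBc⟩) _ η hη hη1 ?_
      · rw [Finset.mem_filter] at hi
        rw [hB, Finset.mem_filter]
        exact ⟨Finset.mem_univ _, hj.2.trans (hx.monotone (by
          rw [Fin.le_def]; simp; exact hi.2.le))⟩
      · intro y hy
        refine (Finset.mem_filter.1 hy).2.trans (mul_le_mul_of_nonneg_left ?_ hη)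
        rw [abs_of_pos hpos]; exact hj.2
  have h1 : ∑ y ∈ S, Wt q zm zp x y ≤
      ∑ y ∈ S, ∑ j ∈ A ∪ B, if |y j| ≤ η * r then Wt q zm zp x y else 0 := by
    refine Finset.sum_le_sum fun y hy => ?_
    obtain ⟨j, hj, hyj⟩ := exists_bad hM hx hc y (hS y hy)
    have hjm : j ∈ A ∪ B := by
      rw [Finset.mem_union, hA, hB, Finset.mem_filter, Finset.mem_filter]
      rcases hj with h | h
      · exact Or.inr ⟨Finset.mem_univ _, h⟩
      · exact Or.inl ⟨Finset.mem_univ _, h⟩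
    refine le_trans (le_of_eq ?_) (Finset.single_le_sum (f := fun j => if |y j| ≤ η * r then
      Wt q zm zp x y else 0) (fun i _ => ?_) hjm)
    · simp only [if_pos hyj]
    · split_ifs
      · exact Wt_nonneg hq0 hq1 hx y
      · exact le_rfl
  refine h1.trans ?_
  rw [Finset.sum_comm]
  have h2 : ∑ j ∈ A ∪ B, ∑ y ∈ S, (if |y j| ≤ η * r then Wt q zm zp x y else 0) ≤
      ∑ j ∈ A ∪ B, (2 / (1 - q)) ^ (k + 2) * η := by
    refine Finset.sum_le_sum fun j hj => ?_
    rw [← Finset.sum_filter]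
    exact hbd j hj
  refine h2.trans ?_
  rw [Finset.sum_const, nsmul_eq_mul]
  have h1q : 0 < 1 - q := by linarith
  refine mul_le_mul_of_nonneg_right ?_ (by positivity)
  have : (A ∪ B).card ≤ 2 * (k + 1) := (Finset.card_union_le A B).trans (by omega)
  exact_mod_cast this

/-- Lemma 3.11: for fixed k ≥ 1 and any ε > 0 there is C > 0 such that for all N = M+1 > k
and X ∈ 𝔾_N, the Λ^N_{N−1}(X,·)-probability of the event
log_q|y_{(k)}| − log_q|x_{(k)}| ≥ C, i.e. |y_{(k)}| ≤ q^C |x_{(k)}|, is at most ε. -/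
theorem kth_term_tail_bound (q zm zp : ℝ) (hq0 : 0 < q) (hq1 : q < 1) (hzm : zm < 0)
    (hzp : 0 < zp) (k : ℕ) (hk : 1 ≤ k) (ε : ℝ) (hε : 0 < ε) :
    ∃ C : ℝ, 0 < C ∧
      ∀ M : ℕ, ∀ _hM : k ≤ M, ∀ X : Conf q zm zp (M+1), ∀ vX : Fin (M+1) → ℝ,
        IsVarSeries q zm zp X vX →
        ∑' Y : {Y : Conf q zm zp M // ∃ vY : Fin M → ℝ,
            IsVarSeries q zm zp Y vY ∧
            |vY ⟨k - 1, by omega⟩| ≤ Real.rpow q C * |vX ⟨k - 1, by omega⟩|},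
          qlink q zm zp M X Y.1 ≤ ε := by
  have h1q : 0 < 1 - q := by linarith
  set K : ℝ := (2 * (k + 1)) * (2 / (1 - q)) ^ (k + 2) with hK
  have hKpos : 0 < K := by positivity
  obtain ⟨n, hn⟩ := exists_pow_lt_of_lt_one (div_pos hε hKpos) hq1
  refine ⟨((n + 1 : ℕ) : ℝ), by positivity, ?_⟩
  intro M hM X vX hvX
  have hrp : Real.rpow q ((n + 1 : ℕ) : ℝ) = q ^ (n + 1) := Real.rpow_natCast q (n + 1)
  have hη : 0 ≤ q ^ (n + 1) := by positivity
  have hη1 : q ^ (n + 1) ≤ 1 := pow_le_one₀ hq0.le hq1.le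
  have hKε : K * q ^ (n + 1) ≤ ε := by
    have h1 : q ^ (n + 1) ≤ q ^ n := pow_le_pow_of_le_one hq0.le hq1.le (by omega)
    have h2 : q ^ (n + 1) ≤ ε / K := h1.trans hn.le
    rw [le_div_iff₀ hKpos] at h2
    linarith
  have hr : 0 < |vX ⟨k - 1, by omega⟩| := by
    obtain ⟨⟨σ, hσ⟩, -⟩ := hvX
    rw [hσ]
    exact abs_pos.2 (lam_ne hq0 hzm hzp (X.2.2 _))
  refine tsum_le_of_sum_le' hε.le fun s => ?_
  have hinj : Function.Injective (fun Y : {Y : Conf q zm zp M // ∃ vY : Fin M → ℝ,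
            IsVarSeries q zm zp Y vY ∧
            |vY ⟨k - 1, by omega⟩| ≤ Real.rpow q ((n + 1 : ℕ) : ℝ) * |vX ⟨k - 1, by omega⟩|} =>
            Y.1.1) := by
    intro a b h
    exact Subtype.ext (Subtype.ext h)
  have he : ∑ Y ∈ s, qlink q zm zp M X Y.1 = ∑ y ∈ s.image (fun Y => Y.1.1),
      Wt q zm zp X.1 y := by
    rw [Finset.sum_image hinj.injOn]
    refine Finset.sum_congr rfl fun Y _ => ?_
    unfold qlink Wt Interlaces
    congr
  rw [he]
  refine (main_bound hq0 hq1 hzm hzp hM X.2.1 X.2.2 hr hη hη1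
    (card_lower hk hM X vX hvX) (card_upper hk hM X vX hvX) _ ?_).trans ?_
  · intro y hy
    obtain ⟨Y, -, rfl⟩ := Finset.mem_image.1 hy
    obtain ⟨vY, hvY, hle⟩ := Y.2
    rw [hrp] at hle
    exact card_Y hk hM Y.1 vY hvY hle
  · rw [← mul_assoc]; exact hKε

end
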